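/- Define real matrices A₁ = [[0,1],[1,0]] (of size 2×2) and, recursively for n ≥ 2, A_n = [[A_{n−1}, I],[I, −A_{n−1}]] (a block matrix of size 2^n × 2^n, where I is the identity of size 2^(n−1)). Then for every n ≥ 1, A_n is symmetric, has trace 0, and satisfies A_n² = n·I (the n-fold scalar multiple of the 2^n × 2^n identity matrix); consequently every eigenvalue of A_n is √n or −√n, and each occurs with multiplicity 2^(n−1). -/

import Mathlib

/-- Index type for the `2^n × 2^n` matrices `A_n`: `hIdx n` has `2^n` elements. -/
def hIdx : ℕ → Type
  | 0 => Unit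
  | n + 1 => hIdx n ⊕ hIdx n

instance hIdxFintype : (n : ℕ) → Fintype (hIdx n)
  | 0 => inferInstanceAs (Fintype Unit)
  | n + 1 => @instFintypeSum _ _ (hIdxFintype n) (hIdxFintype n)

instance hIdxDecidableEq : (n : ℕ) → DecidableEq (hIdx n)
  | 0 => inferInstanceAs (DecidableEq Unit)
  | n + 1 => @instDecidableEqSum _ _ (hIdxDecidableEq n) (hIdxDecidableEq n)

theorem huang_aux {ι : Type} [Fintype ι] [DecidableEq ι] (B : Matrix ι ι ℝ) (s : ℝ) (hs : s ≠ 0)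
    (hB : B * B = (s * s) • (1 : Matrix ι ι ℝ)) (ht : Matrix.trace B = 0) :
    (Module.finrank ℝ (LinearMap.ker (B.mulVecLin - s • LinearMap.id)) : ℝ)
      = Fintype.card ι / 2 := by
  have hBB : ∀ v, B.mulVec (B.mulVec v) = (s * s) • v := by
    intro v
    rw [Matrix.mulVec_mulVec, hB, Matrix.smul_mulVec, Matrix.one_mulVec]
  have hp : LinearMap.IsProj (LinearMap.ker (B.mulVecLin - s • LinearMap.id))
      (((2 * s)⁻¹ : ℝ) • (Matrix.toLin' B + s • LinearMap.id)) := by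
    constructor
    · intro v
      simp only [LinearMap.mem_ker, LinearMap.sub_apply, LinearMap.smul_apply, LinearMap.add_apply,
        LinearMap.id_apply, Matrix.mulVecLin_apply, Matrix.toLin'_apply, Matrix.mulVec_smul,
        Matrix.mulVec_add, hBB]
      module
    · intro v hv
      simp only [LinearMap.mem_ker, LinearMap.sub_apply, LinearMap.smul_apply,
        LinearMap.id_apply, Matrix.mulVecLin_apply, sub_eq_zero] at hv
      simp only [LinearMap.smul_apply, LinearMap.add_apply,
        LinearMap.id_apply, Matrix.toLin'_apply, hv]
      rw [← add_smul, smul_smul, ← two_mul, inv_mul_cancel₀ (by simpa using hs), one_smul]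
  have := hp.trace
  rw [← this, map_smul, map_add, map_smul, Matrix.trace_toLin'_eq, ht, LinearMap.trace_id]
  simp
  field_simp

theorem hIdx_card : ∀ n, Fintype.card (hIdx n) = 2 ^ n
  | 0 => rfl
  | n + 1 => by
    have h : Fintype.card (hIdx (n+1)) = Fintype.card (hIdx n) + Fintype.card (hIdx n) :=
      Fintype.card_sum
    rw [h, hIdx_card n]; ring

theorem huang_blocks {ι : Type} [Fintype ι] [DecidableEq ι] (B : Matrix ι ι ℝ) (c : ℝ)
    (h1 : B.IsSymm) (h3 : B * B = c • (1 : Matrix ι ι ℝ)) :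
    (Matrix.fromBlocks B 1 1 (-B)).IsSymm ∧ Matrix.trace (Matrix.fromBlocks B 1 1 (-B)) = 0 ∧
    Matrix.fromBlocks B 1 1 (-B) * Matrix.fromBlocks B 1 1 (-B)
      = (c + 1) • (1 : Matrix (ι ⊕ ι) (ι ⊕ ι) ℝ) := by
  refine ⟨?_, ?_, ?_⟩
  · exact Matrix.IsSymm.fromBlocks h1 (by simp) h1.neg
  · simp [Matrix.trace, Fintype.sum_sum_type]
  · rw [Matrix.fromBlocks_multiply, ← Matrix.fromBlocks_one, Matrix.fromBlocks_smul]
    simp [h3, add_smul, add_comm]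

/-- Huang's matrices: if `A 1 = [[0,1],[1,0]]` and `A (n+1) = [[A n, I],[I, −A n]]`
for all `n ≥ 1`, then for every `n ≥ 1` the matrix `A n` is symmetric, has trace `0`,
satisfies `(A n)² = n·I`, its only eigenvalues are `√n` and `−√n`, and each of the
two eigenspaces has dimension `2^(n−1)`. -/
theorem huang_matrix_properties
    (A : (n : ℕ) → Matrix (hIdx n) (hIdx n) ℝ)
    (hbase : A 1 = Matrix.fromBlocks 0 1 1 0)
    (hrec : ∀ n : ℕ, 1 ≤ n →
      A (n + 1) = Matrix.fromBlocks (A n) 1 1 (-(A n))) :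
    ∀ n : ℕ, 1 ≤ n →
      (A n).IsSymm ∧
      Matrix.trace (A n) = 0 ∧
      (A n) * (A n) = (n : ℝ) • (1 : Matrix (hIdx n) (hIdx n) ℝ) ∧
      (∀ (μ : ℝ) (v : hIdx n → ℝ), v ≠ 0 → (A n).mulVec v = μ • v →
        μ = Real.sqrt n ∨ μ = -Real.sqrt n) ∧
      Module.finrank ℝ
        (LinearMap.ker ((A n).mulVecLin - Real.sqrt n • LinearMap.id)) = 2 ^ (n - 1) ∧
      Module.finrank ℝ
        (LinearMap.ker ((A n).mulVecLin + Real.sqrt n • LinearMap.id)) = 2 ^ (n - 1) := by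
  have key : ∀ n : ℕ, 1 ≤ n → (A n).IsSymm ∧ Matrix.trace (A n) = 0 ∧
      (A n) * (A n) = (n : ℝ) • (1 : Matrix (hIdx n) (hIdx n) ℝ) := by
    intro n hn
    induction n, hn using Nat.le_induction with
    | base =>
      have h := huang_blocks (0 : Matrix (hIdx 0) (hIdx 0) ℝ) 0 (by simp) (by simp)
      rw [neg_zero, zero_add] at h
      rw [hbase, Nat.cast_one]
      exact h
    | succ n hn ih =>
      have h := huang_blocks (A n) n ih.1 ih.2.2
      rw [hrec n hn, Nat.cast_succ]
      exact h
  intro n hn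
  obtain ⟨h1, h2, h3⟩ := key n hn
  have hpos : (0 : ℝ) < n := by exact_mod_cast hn
  have hs : Real.sqrt n ≠ 0 := (Real.sqrt_pos.2 hpos).ne'
  have hss : Real.sqrt n * Real.sqrt n = n := Real.mul_self_sqrt hpos.le
  have hc : (Fintype.card (hIdx n) : ℝ) / 2 = ((2 ^ (n - 1) : ℕ) : ℝ) := by
    rw [hIdx_card]
    obtain ⟨m, rfl⟩ := Nat.exists_eq_add_of_le' hn
    push_cast
    simp [pow_succ]
  refine ⟨h1, h2, h3, ?_, ?_, ?_⟩
  · intro μ v hv hμ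
    have e : (n : ℝ) • v = (μ * μ) • v := by
      have : ((A n) * (A n)).mulVec v = (μ * μ) • v := by
        rw [← Matrix.mulVec_mulVec, hμ, Matrix.mulVec_smul, hμ, smul_smul]
      rw [← this, h3, Matrix.smul_mulVec, Matrix.one_mulVec]
    have e2 := smul_left_injective ℝ hv e
    exact mul_self_eq_mul_self_iff.1 (by rw [hss]; exact e2.symm)
  · have := huang_aux (A n) (Real.sqrt n) hs (by rw [hss, h3]) h2
    rw [hc] at this
    exact_mod_cast this
  · have := huang_aux (A n) (-Real.sqrt n) (neg_ne_zero.2 hs) (by rw [neg_mul_neg, hss, h3]) h2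
    have he : (A n).mulVecLin - (-Real.sqrt n) • LinearMap.id
        = (A n).mulVecLin + Real.sqrt n • LinearMap.id := by
      apply LinearMap.ext
      intro v
      simp only [LinearMap.sub_apply, LinearMap.add_apply, LinearMap.smul_apply]
      module
    rw [hc, he] at this
    exact_mod_cast this
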